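/- arXiv:1405.6618 — 3 statements merged into one kernel-verified Lean document; each statement's English description precedes it below -/
import Mathlib

section
/- Let q, a, b, c be complex numbers and ℓ a nonnegative integer such that no denominator vanishes. Then the terminating very-well-poised 6phi5 sum: sum over i from 0 to ℓ of ((a;q)_i (1-a q^{2i})/(1-a)) * ((b;q)_i (c;q)_i (q^{-ℓ};q)_i) / ((q;q)_i (qa/b;q)_i (qa/c;q)_i (q^{1+ℓ}a;q)_i) * (q^{1+ℓ}a/(bc))^i equals ((qa;q)_ℓ (qa/(bc);q)_ℓ) / ((qa/b;q)_ℓ (qa/c;q)_ℓ). (Terminating 6phi5 summation.) -/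
/-- q-Pochhammer symbol `(a; q)_k`. -/
noncomputable def qpoch (a q : ℂ) (k : ℕ) : ℂ := ∏ j ∈ Finset.range k, (1 - a * q ^ j)

/-!
Write `S (a, d)` for the sum with a general fourth parameter `d`, the value `d = q ^ (-ℓ)` being
the terminating case. Since `q a / d` and the argument `q a / (b c d)` are invariant under
`(a, d) ↦ (a q, d q)`, the summands of `S (a, d)` and `S (a q, d q)` differ only in a few factors,
and a suitable multiple of the latter differs from the former by a telescoping remainder. The
remainder contains `(d q; q)_n`, so it vanishes when `d = q ^ (-n)` with `n > 0`. Each application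
of the resulting recurrence strips one factor off each Pochhammer symbol of the product.
-/

section QPochhammer

variable (a q : ℂ)

theorem qpoch_zero : qpoch a q 0 = 1 := Finset.prod_range_zero _

theorem qpoch_succ (n : ℕ) : qpoch a q (n + 1) = qpoch a q n * (1 - a * q ^ n) :=
  Finset.prod_range_succ _ _

theorem qpoch_succ' (n : ℕ) : qpoch a q (n + 1) = (1 - a) * qpoch (a * q) q n := by
  simp only [qpoch, Finset.prod_range_succ', pow_zero, mul_one, mul_comm, mul_assoc, pow_succ']

variable {a q}

theorem qpoch_ne_zero_of_le {m n : ℕ} (h : qpoch a q n ≠ 0) (hmn : m ≤ n) : qpoch a q m ≠ 0 :=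
  ne_zero_of_dvd_ne_zero h <|
    Finset.prod_dvd_prod_of_subset _ _ _ (Finset.range_subset_range.2 hmn)

theorem qpoch_eq_zero {m n : ℕ} (h : a * q ^ m = 1) (hmn : m < n) : qpoch a q n = 0 :=
  Finset.prod_eq_zero (Finset.mem_range.2 hmn) (sub_eq_zero.2 h.symm)

end QPochhammer

section WellPoised

/-- The `i`-th term of the very-well-poised series `₆φ₅` with parameters `a, b, c, d`, multiplied
by `1 - a` so that it also makes sense at `a = 1`. -/
noncomputable def wellPoisedTerm (q a b c d : ℂ) (i : ℕ) : ℂ :=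
  qpoch a q i * (1 - a * q ^ (2 * i)) * (qpoch b q i * qpoch c q i * qpoch d q i) /
    (qpoch q q i * qpoch (q * a / b) q i * qpoch (q * a / c) q i * qpoch (q * a / d) q i) *
    (q * a / (b * c * d)) ^ i

/-- The factor by which the `₆φ₅` sum (multiplied by `1 - a`) changes under
`(a, d) ↦ (a * q, d * q)`. -/
noncomputable def wellPoisedRatio (q a b c : ℂ) : ℂ :=
  (1 - a) * (1 - q * a / (b * c)) / ((1 - q * a / b) * (1 - q * a / c))

/-- The telescoping remainder in the contiguous relation under `(a, d) ↦ (a * q, d * q)`. -/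
noncomputable def wellPoisedRemainder (q a b c d : ℂ) (n : ℕ) : ℂ :=
  qpoch a q (n + 1) * (qpoch b q n * qpoch c q n * qpoch (d * q) q n) /
    (qpoch q q n * qpoch (q * a / b) q n * qpoch (q * a / c) q n * qpoch (q * a / d) q n) *
    (q * a / (b * c * d)) ^ n

/-- The factor shared by the four terms of the telescoping step from `n` to `n + 1`, each of which
is this factor times an explicit rational function of `q ^ n`. -/
noncomputable def wellPoisedCommonFactor (q a b c d : ℂ) (n : ℕ) : ℂ :=
  qpoch a q (n + 1) * (qpoch b q n * qpoch c q n * qpoch (d * q) q n) /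
    (qpoch q q n * qpoch (q * a / b) q (n + 1) * qpoch (q * a / c) q (n + 1) *
      qpoch (q * a / d) q n) *
    (q * a / (b * c * d)) ^ n

variable {q a b c d : ℂ}

theorem wellPoisedRatio_mul_wellPoisedTerm (hq : q ≠ 0) (n : ℕ) :
    wellPoisedRatio q a b c * wellPoisedTerm q (a * q) b c (d * q) n =
      wellPoisedCommonFactor q a b c d n *
        ((1 - q * a / (b * c)) * (1 - a * q ^ (2 * n + 1))) := by
  have shift (x : ℂ) : q * (a * q) / x = q * a / x * q := by ring
  have shift_d : q * (a * q) / (d * q) = q * a / d := by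
    rw [← mul_assoc, mul_div_mul_right _ _ hq]
  have shift_arg : q * (a * q) / (b * c * (d * q)) = q * a / (b * c * d) := by
    rw [← mul_assoc, ← mul_assoc, mul_div_mul_right _ _ hq]
  have shift_pow : a * q * q ^ (2 * n) = a * q ^ (2 * n + 1) := by ring
  rw [wellPoisedRatio, wellPoisedTerm, wellPoisedCommonFactor, shift_d, shift_arg, shift, shift,
    shift_pow, qpoch_succ' a, qpoch_succ' (q * a / b), qpoch_succ' (q * a / c)]
  generalize 1 - q * a / b = u
  generalize 1 - q * a / c = v
  ring

theorem wellPoisedRemainder_eq {n : ℕ} (hqab : qpoch (q * a / b) q (n + 1) ≠ 0)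
    (hqac : qpoch (q * a / c) q (n + 1) ≠ 0) :
    wellPoisedRemainder q a b c d n =
      wellPoisedCommonFactor q a b c d n *
        ((1 - q * a / b * q ^ n) * (1 - q * a / c * q ^ n)) := by
  rw [qpoch_succ] at hqab hqac
  have hu := right_ne_zero_of_mul hqab
  have hv := right_ne_zero_of_mul hqac
  rw [wellPoisedRemainder, wellPoisedCommonFactor, qpoch_succ (q * a / b), qpoch_succ (q * a / c)]
  generalize 1 - q * a / b * q ^ n = u at *
  generalize 1 - q * a / c * q ^ n = v at *
  field_simp

theorem wellPoisedTerm_succ (n : ℕ) :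
    wellPoisedTerm q a b c d (n + 1) =
      wellPoisedCommonFactor q a b c d n *
        (q * a / (b * c * d) * ((1 - b * q ^ n) * (1 - c * q ^ n)) *
          ((1 - a * q ^ (2 * (n + 1))) * (1 - d)) /
            ((1 - q * q ^ n) * (1 - q * a / d * q ^ n))) := by
  rw [wellPoisedTerm, wellPoisedCommonFactor, qpoch_succ b, qpoch_succ c, qpoch_succ' d,
    qpoch_succ q, qpoch_succ (q * a / d), pow_succ (q * a / (b * c * d))]
  generalize 1 - q * q ^ n = u
  generalize 1 - q * a / d * q ^ n = v
  ring

theorem wellPoisedRemainder_succ (n : ℕ) :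
    wellPoisedRemainder q a b c d (n + 1) =
      wellPoisedCommonFactor q a b c d n *
        (q * a / (b * c * d) * ((1 - b * q ^ n) * (1 - c * q ^ n)) *
          ((1 - a * q ^ (n + 1)) * (1 - d * q * q ^ n)) /
            ((1 - q * q ^ n) * (1 - q * a / d * q ^ n))) := by
  rw [wellPoisedRemainder, wellPoisedCommonFactor, qpoch_succ a q (n + 1), qpoch_succ b,
    qpoch_succ c, qpoch_succ (d * q), qpoch_succ q, qpoch_succ (q * a / d),
    pow_succ (q * a / (b * c * d))]
  generalize 1 - q * q ^ n = u
  generalize 1 - q * a / d * q ^ n = v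
  ring

theorem wellPoisedRemainder_sub_ratio_mul_term (hq : q ≠ 0) (hb : b ≠ 0) (hc : c ≠ 0) {n : ℕ}
    (hqab : qpoch (q * a / b) q (n + 1) ≠ 0) (hqac : qpoch (q * a / c) q (n + 1) ≠ 0) :
    wellPoisedRemainder q a b c d n -
        wellPoisedRatio q a b c * wellPoisedTerm q (a * q) b c (d * q) n =
      wellPoisedCommonFactor q a b c d n *
        (q * a / (b * c) * ((1 - b * q ^ n) * (1 - c * q ^ n))) := by
  have hnum : (1 - q * a / b * q ^ n) * (1 - q * a / c * q ^ n) -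
      (1 - q * a / (b * c)) * (1 - a * q ^ (2 * n + 1)) =
        q * a / (b * c) * ((1 - b * q ^ n) * (1 - c * q ^ n)) := by
    field_simp
    ring
  rw [wellPoisedRemainder_eq hqab hqac, wellPoisedRatio_mul_wellPoisedTerm hq, ← mul_sub, hnum]

theorem wellPoisedRemainder_succ_sub_term_succ (hd : d ≠ 0) {n : ℕ}
    (hqq : qpoch q q (n + 1) ≠ 0) (hqad : qpoch (q * a / d) q (n + 1) ≠ 0) :
    wellPoisedRemainder q a b c d (n + 1) - wellPoisedTerm q a b c d (n + 1) =
      wellPoisedCommonFactor q a b c d n *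
        (q * a / (b * c) * ((1 - b * q ^ n) * (1 - c * q ^ n))) := by
  rw [qpoch_succ] at hqq hqad
  have hden : (1 - q * q ^ n) * (1 - q * a / d * q ^ n) ≠ 0 :=
    mul_ne_zero (right_ne_zero_of_mul hqq) (right_ne_zero_of_mul hqad)
  have hnum : (1 - a * q ^ (n + 1)) * (1 - d * q * q ^ n) -
      (1 - a * q ^ (2 * (n + 1))) * (1 - d) =
        d * ((1 - q * q ^ n) * (1 - q * a / d * q ^ n)) := by
    field_simp
    ring
  have harg : q * a / (b * c * d) * d = q * a / (b * c) := by
    rw [div_mul_eq_mul_div, mul_div_mul_right _ _ hd]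
  rw [wellPoisedRemainder_succ, wellPoisedTerm_succ, ← mul_sub, ← sub_div, ← mul_sub, hnum,
    ← mul_assoc, mul_div_cancel_right₀ _ hden, mul_right_comm, harg]

theorem sum_wellPoisedTerm_eq_ratio_mul_sum_add_remainder (hq : q ≠ 0) (hb : b ≠ 0) (hc : c ≠ 0)
    (hd : d ≠ 0) {n : ℕ} (hqq : qpoch q q n ≠ 0) (hqab : qpoch (q * a / b) q n ≠ 0)
    (hqac : qpoch (q * a / c) q n ≠ 0) (hqad : qpoch (q * a / d) q n ≠ 0) :
    ∑ i ∈ Finset.range (n + 1), wellPoisedTerm q a b c d i =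
      wellPoisedRatio q a b c * ∑ i ∈ Finset.range n, wellPoisedTerm q (a * q) b c (d * q) i +
        wellPoisedRemainder q a b c d n := by
  induction n with
  | zero => simp [wellPoisedTerm, wellPoisedRemainder, qpoch_succ, qpoch_zero]
  | succ n ih =>
    have hn := n.le_succ
    rw [Finset.sum_range_succ, ih (qpoch_ne_zero_of_le hqq hn) (qpoch_ne_zero_of_le hqab hn)
      (qpoch_ne_zero_of_le hqac hn) (qpoch_ne_zero_of_le hqad hn), Finset.sum_range_succ]
    linear_combination wellPoisedRemainder_sub_ratio_mul_term (d := d) hq hb hc hqab hqac -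
      wellPoisedRemainder_succ_sub_term_succ (b := b) (c := c) hd hqq hqad

theorem sum_wellPoisedTerm_of_mul_pow_eq_one (hb : b ≠ 0) (hc : c ≠ 0) {n : ℕ}
    (hd : d * q ^ n = 1) (hqq : qpoch q q n ≠ 0) (hqab : qpoch (q * a / b) q n ≠ 0)
    (hqac : qpoch (q * a / c) q n ≠ 0) (hqad : qpoch (q * a / d) q n ≠ 0) :
    ∑ i ∈ Finset.range (n + 1), wellPoisedTerm q a b c d i =
      qpoch a q (n + 1) * qpoch (q * a / (b * c)) q n /
        (qpoch (q * a / b) q n * qpoch (q * a / c) q n) := by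
  induction n generalizing a d with
  | zero => simp [wellPoisedTerm, qpoch_succ, qpoch_zero]
  | succ n ih =>
    have hd' : d * q * q ^ n = 1 := by rw [mul_assoc, ← pow_succ', hd]
    have hdq : d * q ≠ 0 := left_ne_zero_of_mul_eq_one hd'
    have hd₀ : d ≠ 0 := left_ne_zero_of_mul hdq
    have hq₀ : q ≠ 0 := right_ne_zero_of_mul hdq
    have hrem : wellPoisedRemainder q a b c d (n + 1) = 0 := by
      simp [wellPoisedRemainder, qpoch_eq_zero hd' n.lt_succ_self]
    have shift (x : ℂ) : q * (a * q) / x = q * a / x * q := by ring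
    have shift_d : q * (a * q) / (d * q) = q * a / d := by
      rw [← mul_assoc, mul_div_mul_right _ _ hq₀]
    have ih := ih (a := a * q) hd' (qpoch_ne_zero_of_le hqq n.le_succ)
      (by rw [shift]; exact right_ne_zero_of_mul (qpoch_succ' (q * a / b) q n ▸ hqab))
      (by rw [shift]; exact right_ne_zero_of_mul (qpoch_succ' (q * a / c) q n ▸ hqac))
      (by rw [shift_d]; exact qpoch_ne_zero_of_le hqad n.le_succ)
    rw [sum_wellPoisedTerm_eq_ratio_mul_sum_add_remainder hq₀ hb hc hd₀ hqq hqab hqac hqad, hrem,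
      add_zero, ih, wellPoisedRatio, shift, shift, shift, qpoch_succ' a q (n + 1),
      qpoch_succ' (q * a / b), qpoch_succ' (q * a / c), qpoch_succ' (q * a / (b * c)),
      div_mul_div_comm]
    congr 1 <;> ring

end WellPoised

theorem terminating_6phi5 (ℓ : ℕ) (q a b c : ℂ) (hq : q ≠ 0)
    (ha : (1 : ℂ) - a ≠ 0) (hb : b ≠ 0) (hc : c ≠ 0)
    (hden : ∀ i ≤ ℓ,
      qpoch q q i * qpoch (q*a/b) q i * qpoch (q*a/c) q i * qpoch (q^(1+ℓ)*a) q i ≠ 0)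
    (hden2 : qpoch (q*a/b) q ℓ * qpoch (q*a/c) q ℓ ≠ 0) :
    ∑ i ∈ Finset.range (ℓ+1),
      qpoch a q i * ((1 - a * q^(2*i)) / (1 - a)) *
        (qpoch b q i * qpoch c q i * qpoch (q ^ (-(ℓ : ℤ))) q i) /
        (qpoch q q i * qpoch (q*a/b) q i * qpoch (q*a/c) q i * qpoch (q^(1+ℓ)*a) q i) *
        (q^(1+ℓ)*a/(b*c))^i
      = (qpoch (q*a) q ℓ * qpoch (q*a/(b*c)) q ℓ) /
          (qpoch (q*a/b) q ℓ * qpoch (q*a/c) q ℓ) := by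
  have hd : q ^ (-(ℓ : ℤ)) * q ^ ℓ = 1 := by
    rw [zpow_neg, zpow_natCast, inv_mul_cancel₀ (pow_ne_zero ℓ hq)]
  have hqad : q ^ (1 + ℓ) * a = q * a / q ^ (-(ℓ : ℤ)) := by
    rw [zpow_neg, zpow_natCast, div_inv_eq_mul]
    ring
  have hx : q ^ (1 + ℓ) * a / (b * c) = q * a / (b * c * q ^ (-(ℓ : ℤ))) := by
    rw [hqad, div_div, mul_comm (b * c)]
  have h := hden ℓ le_rfl
  rw [hqad] at h
  simp only [mul_ne_zero_iff] at h
  obtain ⟨⟨⟨hqq, hqab⟩, hqac⟩, hqad'⟩ := h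
  have hsum := sum_wellPoisedTerm_of_mul_pow_eq_one hb hc hd hqq hqab hqac hqad'
  rw [qpoch_succ', mul_comm a q] at hsum
  rw [hx, hqad, ← mul_right_inj' ha, Finset.mul_sum]
  refine Eq.trans (Finset.sum_congr rfl fun i _ => ?_) (hsum.trans (by ring))
  rw [wellPoisedTerm]
  field_simp
end

section
/- For every nonnegative integer ℓ, nonnegative integer n, and complex number x such that no denominator vanishes: sum over k from 0 to n of ((3x)_k (1-ℓ-3x)_k (-n)_k)/(k! (1/2)_k (-3n)_k) * (3/4)^k equals ((3x)_ℓ/(6x)_ℓ) * sum over i from 0 to ℓ of (-1)^i * (6x+2i-1)/(6x-1) * ((-ℓ)_i (6x-1)_i)/(i! (6x+ℓ)_i) * (((1+i)/3 + x)_n ((2-i)/3 - x)_n)/((1/3)_n (2/3)_n). (Generalization of Gosper's first identity with an extra integer parameter.) -/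
/-- Pochhammer symbol (rising factorial) `(a)_k`. -/
noncomputable def poch (a : ℂ) (k : ℕ) : ℂ := ∏ j ∈ Finset.range k, (a + j)

/-
Since `(y+k)(1-y+k) = y(1-y) + k(k+1)`, multiplying `(y)_k (1-y)_k` by `y(1-y)` gives
`(y)_{k+1} (1-y)_{k+1} - k(k+1) (y)_k (1-y)_k`. In Gosper's identity, passing from `n` to `n+1`
multiplies the right-hand side by `((3n+1)(3n+2) + y(1-y)) / ((3n+1)(3n+2))`, so the identity
reduces to a recurrence of Pascal type for the coefficients of `(y)_k (1-y)_k`. For the extension,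
induction on `ℓ` through a contiguous relation expands `(y)_k (1-ℓ-y)_k` in the products
`(y+i)_k (1-(y+i))_k`, `0 ≤ i ≤ ℓ`, with coefficients independent of `k`; Gosper's identity then
sums each of them, and `y = 3x`.
-/

open Finset
open scoped Nat

theorem sum_range_succ_mul_of_pascal {R : Type*} [NonUnitalNonAssocSemiring R] {N : ℕ}
    {c u v : ℕ → R} (e : ℕ → R) (hzero : c 0 = u 0) (hsucc : ∀ k < N, c (k + 1) = u (k + 1) + v k)
    (hu : u N = 0) :
    ∑ k ∈ range (N + 1), c k * e k = ∑ k ∈ range N, (u k * e k + v k * e (k + 1)) := by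
  calc
    _ = ∑ k ∈ range N, (u (k + 1) + v k) * e (k + 1) + u 0 * e 0 := by
      rw [sum_range_succ', hzero]
      congr 1
      exact sum_congr rfl fun k hk => by rw [hsucc k (mem_range.1 hk)]
    _ = ∑ k ∈ range (N + 1), u k * e k + ∑ k ∈ range N, v k * e (k + 1) := by
      rw [sum_range_succ']
      simp only [add_mul, sum_add_distrib, add_right_comm]
    _ = _ := by rw [sum_range_succ, hu, zero_mul, add_zero, sum_add_distrib]

theorem cast_choose_succ_succ_mul_add {R : Type*} [CommRing R] (m i : ℕ) (a : R) :
    ((m + 1).choose (i + 1) : R) * (a + m) =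
      m.choose (i + 1) * (a + i + m + 1) + m.choose i * (a + i) := by
  have absorb : (m.choose (i + 1) : R) * (i + 1) = m.choose i * (m - i) := by
    rcases le_or_gt i m with hi | hi
    · rw [← Nat.cast_sub hi]
      exact_mod_cast congrArg (Nat.cast (R := R)) (Nat.choose_succ_right_eq m i)
    · simp [Nat.choose_eq_zero_of_lt, hi, Nat.lt_succ_of_lt hi]
  rw [Nat.choose_succ_succ, Nat.cast_add]
  linear_combination -absorb

theorem poch_zero (a : ℂ) : poch a 0 = 1 := prod_range_zero _

theorem poch_succ (a : ℂ) (k : ℕ) : poch a (k + 1) = poch a k * (a + k) := prod_range_succ _ _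

theorem poch_add (a : ℂ) (m k : ℕ) : poch a (m + k) = poch a m * poch (a + m) k := by
  simp [poch, prod_range_add, add_assoc]

theorem poch_succ_left (a : ℂ) (k : ℕ) : poch a (k + 1) = a * poch (a + 1) k := by
  rw [add_comm, poch_add]
  simp [poch]

theorem poch_succ_mul_eq_mul_poch_add_three (a : ℂ) (k : ℕ) :
    poch a (k + 1) * ((a + k + 1) * (a + k + 2)) = a * (a + 1) * (a + 2) * poch (a + 3) k := by
  calc
    _ = poch a (k + 1 + 1 + 1) := by
      rw [poch_succ _ (k + 1 + 1), poch_succ _ (k + 1)]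
      push_cast
      ring
    _ = _ := by
      rw [poch_succ_left, poch_succ_left, poch_succ_left, show a + 1 + 1 + 1 = a + 3 by ring]
      ring

theorem poch_ne_zero_of_add_le {a : ℂ} {N i m : ℕ} (h : poch a N ≠ 0) (him : i + m ≤ N) :
    poch (a + i) m ≠ 0 := by
  obtain ⟨d, rfl⟩ := Nat.exists_eq_add_of_le him
  rw [poch_add, poch_add] at h
  exact right_ne_zero_of_mul (left_ne_zero_of_mul h)

theorem add_natCast_ne_zero_of_poch_ne_zero {a : ℂ} {N i : ℕ} (h : poch a N ≠ 0) (hi : i < N) :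
    a + i ≠ 0 :=
  prod_ne_zero_iff.1 h i (mem_range.2 hi)

theorem poch_neg_natCast (m k : ℕ) : poch (-(m : ℂ)) k = (-1) ^ k * (k ! * m.choose k) := by
  have eval_eq (k : ℕ) : poch (-(m : ℂ)) k = (ascPochhammer ℂ k).eval (-(m : ℂ)) := by
    induction k with
    | zero => simp [poch_zero]
    | succ k ih => rw [poch_succ, ascPochhammer_succ_eval, ih]
  rw [eval_eq, ascPochhammer_eval_neg_eq_descPochhammer, descPochhammer_eval_eq_descFactorial,
    Nat.descFactorial_eq_factorial_mul_choose, Nat.cast_mul]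

/-- The coefficient of `(y)_k (1-y)_k` in Gosper's first sum. -/
noncomputable def gosperCoeff (n k : ℕ) : ℂ :=
  poch (-(n : ℂ)) k / (k ! * poch (1 / 2) k * poch (-(3 * n : ℂ)) k) * (3 / 4) ^ k

theorem gosperCoeff_zero_right (n : ℕ) : gosperCoeff n 0 = 1 := by
  simp [gosperCoeff, poch_zero]

theorem gosperCoeff_self_succ (n : ℕ) : gosperCoeff n (n + 1) = 0 := by
  simp [gosperCoeff, poch_neg_natCast]

theorem gosperCoeff_succ_right {n k : ℕ} (hk : k ≤ n) :
    2 * (k + 1) * (2 * k + 1) * (3 * n - k) * gosperCoeff n (k + 1) =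
      3 * (n - k) * gosperCoeff n k := by
  rcases eq_or_lt_of_le hk with rfl | hk
  · rw [gosperCoeff_self_succ, sub_self, mul_zero, mul_zero, zero_mul]
  have hk1 : (k + 1 : ℂ) ≠ 0 := k.cast_add_one_ne_zero
  have h2k1 : (2 * k + 1 : ℂ) ≠ 0 := by exact_mod_cast (2 * k).succ_ne_zero
  have h3n : (-(3 * n) + k : ℂ) ≠ 0 := by
    rw [neg_add_eq_sub, sub_ne_zero]
    exact_mod_cast show k ≠ 3 * n by omega
  rw [gosperCoeff, gosperCoeff, poch_succ, poch_succ, poch_succ, Nat.factorial_succ, pow_succ,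
    show (1 / 2 + k : ℂ) = (2 * k + 1) / 2 by ring]
  push_cast
  field_simp
  ring

theorem gosperCoeff_succ_succ {n k : ℕ} (hk : k ≤ 3 * n) :
    (3 * n + 1) * (3 * n + 2) * (2 * (k + 1) * (2 * k + 1)) * gosperCoeff (n + 1) (k + 1) =
      (3 * n + 1 - k) * (3 * n + 2 - k) * gosperCoeff n k := by
  have hn1 : (n + 1 : ℂ) ≠ 0 := n.cast_add_one_ne_zero
  have h3n1 : (3 * n + 1 : ℂ) ≠ 0 := by exact_mod_cast (3 * n).succ_ne_zero
  have h3n2 : (3 * n + 2 : ℂ) ≠ 0 := by exact_mod_cast (3 * n + 1).succ_ne_zero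
  have hk1 : (k + 1 : ℂ) ≠ 0 := k.cast_add_one_ne_zero
  have h2k1 : (2 * k + 1 : ℂ) ≠ 0 := by exact_mod_cast (2 * k).succ_ne_zero
  have hk3n1 : (3 * n + 1 - k : ℂ) ≠ 0 := by
    rw [sub_ne_zero]
    exact_mod_cast show 3 * n + 1 ≠ k by omega
  have hk3n2 : (3 * n + 2 - k : ℂ) ≠ 0 := by
    rw [sub_ne_zero]
    exact_mod_cast show 3 * n + 2 ≠ k by omega
  have hnum : poch (-((n + 1 : ℕ) : ℂ)) (k + 1) = -(n + 1) * poch (-(n : ℂ)) k := by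
    rw [poch_succ_left, Nat.cast_succ, neg_add_rev, neg_add_cancel_comm]
  have hden : poch (-(3 * (n + 1) : ℂ)) (k + 1) =
      -(3 * (n + 1) * (3 * n + 1) * (3 * n + 2)) * poch (-(3 * n : ℂ)) k /
        ((3 * n + 1 - k) * (3 * n + 2 - k)) := by
    rw [eq_div_iff (mul_ne_zero hk3n1 hk3n2),
      show (-(3 * n) : ℂ) = -(3 * (n + 1)) + 3 by ring]
    linear_combination poch_succ_mul_eq_mul_poch_add_three (-(3 * (n + 1))) k
  rw [gosperCoeff, gosperCoeff, hnum, Nat.cast_succ n, hden, poch_succ, Nat.factorial_succ,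
    pow_succ, show (1 / 2 + k : ℂ) = (2 * k + 1) / 2 by ring]
  push_cast
  field_simp
  ring

theorem gosperCoeff_pascal {n k : ℕ} (hk : k ≤ n) :
    (3 * n + 1) * (3 * n + 2) * gosperCoeff (n + 1) (k + 1) =
      ((3 * n + 1) * (3 * n + 2) - (k + 1) * (k + 2)) * gosperCoeff n (k + 1) +
        gosperCoeff n k := by
  have hk1 : (k + 1 : ℂ) ≠ 0 := k.cast_add_one_ne_zero
  have h2k1 : (2 * k + 1 : ℂ) ≠ 0 := by exact_mod_cast (2 * k).succ_ne_zero
  apply mul_left_cancel₀ (mul_ne_zero (mul_ne_zero two_ne_zero hk1) h2k1)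
  -- `(3n+1)(3n+2) - (k+1)(k+2) = (3n-k)(3n+k+3)`
  linear_combination gosperCoeff_succ_succ (show k ≤ 3 * n by omega) -
    (3 * n + k + 3) * gosperCoeff_succ_right hk

theorem sum_gosperCoeff_succ (n : ℕ) (y : ℂ) :
    (3 * n + 1) * (3 * n + 2) *
        ∑ k ∈ range (n + 1 + 1), gosperCoeff (n + 1) k * (poch y k * poch (1 - y) k) =
      (1 + y + 3 * n) * (2 - y + 3 * n) *
        ∑ k ∈ range (n + 1), gosperCoeff n k * (poch y k * poch (1 - y) k) := by
  simp only [mul_sum, ← mul_assoc _ (gosperCoeff _ _)]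
  rw [sum_range_succ_mul_of_pascal
    (u := fun k => ((3 * n + 1) * (3 * n + 2) - k * (k + 1)) * gosperCoeff n k)
    (v := gosperCoeff n)]
  · refine sum_congr rfl fun k _ => ?_
    rw [poch_succ, poch_succ]
    ring
  · simp [gosperCoeff_zero_right]
  · intro k hk
    rw [gosperCoeff_pascal (Nat.lt_succ_iff.1 hk)]
    push_cast
    ring
  · rw [gosperCoeff_self_succ, mul_zero]

theorem gosper_first (n : ℕ) (y : ℂ) :
    ∑ k ∈ range (n + 1), gosperCoeff n k * (poch y k * poch (1 - y) k) =
      poch ((1 + y) / 3) n * poch ((2 - y) / 3) n / (poch (1 / 3) n * poch (2 / 3) n) := by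
  induction n with
  | zero => simp [poch_zero, gosperCoeff_zero_right]
  | succ n ih =>
    have h1 : (3 * n + 1 : ℂ) ≠ 0 := by exact_mod_cast (3 * n).succ_ne_zero
    have h2 : (3 * n + 2 : ℂ) ≠ 0 := by exact_mod_cast (3 * n + 1).succ_ne_zero
    apply mul_left_cancel₀ (mul_ne_zero h1 h2)
    rw [sum_gosperCoeff_succ, ih]
    simp only [poch_succ]
    rw [show (1 / 3 + n : ℂ) = (3 * n + 1) / 3 by ring,
      show (2 / 3 + n : ℂ) = (3 * n + 2) / 3 by ring]
    field_simp

/-- The coefficient of `(y+i)_k (1-(y+i))_k` in the expansion of `(y)_k (1-ℓ-y)_k`, with the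
Pochhammer symbols of the paper merged into the single denominator `(2y-1+i)_{ℓ+1}`. -/
noncomputable def connCoeff (ℓ : ℕ) (y : ℂ) (i : ℕ) : ℂ :=
  ℓ.choose i * poch y ℓ * (2 * y + 2 * i - 1) / poch (2 * y - 1 + i) (ℓ + 1)

theorem connCoeff_self_succ (ℓ : ℕ) (y : ℂ) : connCoeff ℓ y (ℓ + 1) = 0 := by
  simp [connCoeff]

theorem connCoeff_succ_zero {ℓ : ℕ} {y : ℂ} (h : 2 * y + ℓ ≠ 0) :
    (2 * y + ℓ) * connCoeff (ℓ + 1) y 0 = (y + ℓ) * connCoeff ℓ y 0 := by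
  have hden : 2 * y - 1 + (0 : ℕ) + (ℓ + 1 : ℕ) = 2 * y + ℓ := by push_cast; ring
  rw [connCoeff, connCoeff, poch_succ y, poch_succ _ (ℓ + 1), hden]
  simp only [Nat.choose_zero_right]
  field_simp

theorem connCoeff_succ_succ {ℓ i : ℕ} {y : ℂ} (hi : 2 * y + i ≠ 0)
    (hiℓ : 2 * y + i + ℓ + 1 ≠ 0) :
    (2 * y + ℓ) * connCoeff (ℓ + 1) y (i + 1) =
      (y + ℓ) * connCoeff ℓ y (i + 1) + y * connCoeff ℓ (y + 1) i := by
  have hy : 2 * y - 1 + (i + 1 : ℕ) = 2 * y + i := by push_cast; ring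
  have hy' : 2 * (y + 1) - 1 + (i : ℂ) = 2 * y + i + 1 := by ring
  have top : poch (2 * y + i + 1) (ℓ + 1) = poch (2 * y + i + 1) ℓ * (2 * y + i + ℓ + 1) := by
    rw [poch_succ, add_right_comm _ 1]
  have num : y * poch (y + 1) ℓ = poch y ℓ * (y + ℓ) := by rw [← poch_succ_left, poch_succ]
  have pascal := cast_choose_succ_succ_mul_add ℓ i (2 * y)
  rw [connCoeff, connCoeff, connCoeff, hy, hy', poch_succ_left (2 * y + i) (ℓ + 1), top,
    poch_succ_left (2 * y + i) ℓ, poch_succ y]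
  set q := poch (2 * y + i + 1) ℓ
  set a := 2 * y + (i : ℂ)
  set t := a + ℓ + 1
  set w := 2 * y + 2 * ((i + 1 : ℕ) : ℂ) - 1 with hw
  have hw' : 2 * (y + 1) + 2 * (i : ℂ) - 1 = w := by rw [hw]; push_cast; ring
  calc
    _ = poch y ℓ * (y + ℓ) * w / (a * q * t) * ((ℓ + 1).choose (i + 1) * (2 * y + ℓ)) := by
      ring
    _ = (y + ℓ) * (ℓ.choose (i + 1) * poch y ℓ * w / (a * q)) +
        ℓ.choose i * (poch y ℓ * (y + ℓ)) * w / (q * t) := by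
      rw [pascal]
      field_simp
    _ = _ := by
      rw [← num, hw']
      ring

theorem poch_mul_poch_contiguous (y c : ℂ) (k : ℕ) :
    (2 * y + c) * (poch y k * poch (-c - y) k) =
      (y + c) * (poch y k * poch (1 - c - y) k) + y * (poch (y + 1) k * poch (-c - y) k) := by
  have hy : y * poch (y + 1) k = poch y k * (y + k) := by rw [← poch_succ_left, poch_succ]
  have hc : (-c - y) * poch (1 - c - y) k = poch (-c - y) k * (-c - y + k) := by
    rw [← poch_succ, poch_succ_left, show 1 - c - y = -c - y + 1 by ring]
  linear_combination poch y k * hc - poch (-c - y) k * hy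

theorem poch_mul_poch_eq_sum_connCoeff {ℓ : ℕ} {y : ℂ} (h : poch (2 * y - 1) (2 * ℓ + 1) ≠ 0)
    (k : ℕ) :
    poch y k * poch (1 - ℓ - y) k =
      ∑ i ∈ range (ℓ + 1), connCoeff ℓ y i * (poch (y + i) k * poch (1 - (y + i)) k) := by
  induction ℓ generalizing y with
  | zero =>
    have hy : 2 * y - 1 ≠ 0 := by simpa [poch] using h
    simp [connCoeff, poch_zero, poch_succ, hy]
  | succ ℓ ih =>
    have hadd {j : ℕ} (hj : j + 1 < 2 * (ℓ + 1) + 1) : 2 * y + j ≠ 0 := by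
      convert add_natCast_ne_zero_of_poch_ne_zero h hj using 1
      push_cast
      ring
    have hℓ : 2 * y + ℓ ≠ 0 := hadd (by omega)
    have ihy := ih (y := y) (by simpa using poch_ne_zero_of_add_le (i := 0) h (by omega))
    have ihy' := ih (y := y + 1) (by
      convert poch_ne_zero_of_add_le (i := 2) (m := 2 * ℓ + 1) h (by omega) using 2
      push_cast
      ring)
    rw [show (1 - ℓ - (y + 1) : ℂ) = -ℓ - y by ring] at ihy'
    apply mul_left_cancel₀ hℓ
    rw [show (1 - (ℓ + 1 : ℕ) - y : ℂ) = -ℓ - y by push_cast; ring, poch_mul_poch_contiguous,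
      ihy, ihy', mul_sum, mul_sum, mul_sum, ← sum_add_distrib]
    simp only [← mul_assoc _ (connCoeff _ _ _)]
    rw [sum_range_succ_mul_of_pascal (u := fun i => (y + ℓ) * connCoeff ℓ y i)
      (v := fun i => y * connCoeff ℓ (y + 1) i)]
    · refine sum_congr rfl fun i _ => ?_
      rw [show y + (i + 1 : ℕ) = y + 1 + i by push_cast; ring]
    · exact connCoeff_succ_zero hℓ
    · intro i hi
      refine connCoeff_succ_succ (hadd (by omega)) ?_
      simpa [← add_assoc] using hadd (j := i + ℓ + 1) (by omega)
    · rw [connCoeff_self_succ, mul_zero]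

theorem connCoeff_eq_poch {i : ℕ} {y : ℂ} (h : poch (2 * y - 1) i ≠ 0) (ℓ : ℕ) :
    connCoeff ℓ y i = poch y ℓ / poch (2 * y) ℓ *
      ((-1) ^ i * ((2 * y + 2 * i - 1) / (2 * y - 1)) *
        (poch (-(ℓ : ℂ)) i * poch (2 * y - 1) i) / (i ! * poch (2 * y + ℓ) i)) := by
  have split : poch (2 * y - 1) i * poch (2 * y - 1 + i) (ℓ + 1) =
      (2 * y - 1) * poch (2 * y) ℓ * poch (2 * y + ℓ) i := by
    rw [← poch_add, mul_assoc, ← poch_add, add_comm i, add_right_comm, poch_succ_left,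
      sub_add_cancel]
  have hfac : (i ! : ℂ) ≠ 0 := by exact_mod_cast i.factorial_ne_zero
  have choose_eq : (ℓ.choose i : ℂ) = (-1) ^ i * poch (-(ℓ : ℂ)) i / i ! := by
    rw [eq_div_iff hfac, poch_neg_natCast, ← mul_assoc, ← mul_pow, neg_one_mul, neg_neg, one_pow,
      one_mul, mul_comm]
  calc
    connCoeff ℓ y i = ℓ.choose i * poch y ℓ * (2 * y + 2 * i - 1) * poch (2 * y - 1) i /
        ((2 * y - 1) * poch (2 * y) ℓ * poch (2 * y + ℓ) i) := by
      rw [connCoeff, ← split, mul_comm (poch (2 * y - 1) i), mul_div_mul_right _ _ h]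
    _ = _ := by
      rw [choose_eq]
      generalize 2 * y - 1 = b
      ring

theorem gosper_first_extension (ℓ n : ℕ) (x : ℂ)
    (h6x : 6*x - 1 ≠ 0) (h6xℓ : poch (6*x) ℓ ≠ 0)
    (hdeni : ∀ i ≤ ℓ, poch (6*x + ℓ) i ≠ 0)
    (hden : ∀ k ≤ n, poch (1/2) k ≠ 0 ∧ poch (-(3*n : ℂ)) k ≠ 0)
    (h13 : poch (1/3) n ≠ 0) (h23 : poch (2/3) n ≠ 0) :
    ∑ k ∈ Finset.range (n+1),
      (poch (3*x) k * poch (1 - ℓ - 3*x) k * poch (-(n : ℂ)) k) /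
        ((Nat.factorial k : ℂ) * poch (1/2) k * poch (-(3*n : ℂ)) k) * (3/4 : ℂ)^k
      = poch (3*x) ℓ / poch (6*x) ℓ *
        ∑ i ∈ Finset.range (ℓ+1),
          (-1 : ℂ)^i * ((6*x + 2*i - 1) / (6*x - 1)) *
            (poch (-(ℓ : ℂ)) i * poch (6*x - 1) i) /
            ((Nat.factorial i : ℂ) * poch (6*x + ℓ) i) *
            ((poch ((1 + i)/3 + x) n * poch ((2 - i)/3 - x) n) /
              (poch (1/3) n * poch (2/3) n)) := by
  have hprod : poch (2 * (3 * x) - 1) (2 * ℓ + 1) ≠ 0 := by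
    rw [poch_succ_left, two_mul ℓ, poch_add, sub_add_cancel, show 2 * (3 * x) = 6 * x by ring]
    exact mul_ne_zero h6x (mul_ne_zero h6xℓ (hdeni ℓ le_rfl))
  calc
    _ = ∑ i ∈ range (ℓ + 1), connCoeff ℓ (3 * x) i * ∑ k ∈ range (n + 1),
          gosperCoeff n k * (poch (3 * x + i) k * poch (1 - (3 * x + i)) k) := by
      simp only [poch_mul_poch_eq_sum_connCoeff hprod, mul_sum, sum_mul, sum_div]
      rw [sum_comm]
      refine sum_congr rfl fun i _ => sum_congr rfl fun k _ => ?_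
      rw [gosperCoeff]
      ring
    _ = _ := by
      rw [mul_sum]
      refine sum_congr rfl fun i hi => ?_
      have hpoch : poch (2 * (3 * x) - 1) i ≠ 0 := by
        simpa using poch_ne_zero_of_add_le (i := 0) hprod (by have := mem_range.1 hi; omega)
      rw [gosper_first, connCoeff_eq_poch hpoch, show 2 * (3 * x) = 6 * x by ring,
        show (1 + (3 * x + i)) / 3 = (1 + i) / 3 + x by ring,
        show (2 - (3 * x + i)) / 3 = (2 - i) / 3 - x by ring]
      ring
end

section
/- For every nonnegative integer n and complex number x with 6x-1 != 0: sum over k from 0 to n of ((3x)_k (-3x)_k (-n)_k)/(k! (1/2)_k (-3n)_k) * (3/4)^k equals (1/2) * ((1/3+x)_n (2/3-x)_n)/((1/3)_n (2/3)_n) + (1/2) * ((2/3+x)_n (1/3-x)_n)/((1/3)_n (2/3)_n). -/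
/-!
Put `u = a * (1 - a)`. Then `(a)_k (1 - a)_k = ∏_{j < k} (u + j (j + 1))`, while
`9 ^ n ((1 + a) / 3)_n ((2 - a) / 3)_n = ∏_{j < n} (u + (3 j + 1) (3 j + 2))`. Hence Gosper's
evaluation of `₃F₂(a, 1 - a, -n; 1/2, -3n; 3/4)` is the expansion of the second product in the
Newton basis formed by the products of the first kind. Its coefficients obey a Pascal-type
recurrence, coming from
`u + (3 n + 1) (3 n + 2) = (u + k (k + 1)) + (3 n + 1 - k) (3 n + 2 + k)`.
The series with numerator parameters `a, -a` is the average of Gosper's series at `a` and at `-a`.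
-/

section

open Finset
open scoped Nat

local notation "⦗" a "⦘_" k:max => Polynomial.eval a (ascPochhammer _ k)

theorem sum_antidiagonal_succ_of_pascal {M : Type*} [AddCommMonoid M] {c α β : ℕ → ℕ → M}
    (zero_succ : ∀ m, c 0 (m + 1) = β 0 m) (succ_zero : ∀ k, c (k + 1) 0 = α k 0)
    (succ_succ : ∀ k m, c (k + 1) (m + 1) = α k (m + 1) + β (k + 1) m) (n : ℕ) :
    ∑ p ∈ antidiagonal (n + 1), c p.1 p.2 = ∑ p ∈ antidiagonal n, (α p.1 p.2 + β p.1 p.2) := by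
  cases n with
  | zero => simp [Nat.sum_antidiagonal_succ, zero_succ, succ_zero, add_comm]
  | succ n =>
    rw [sum_add_distrib, Nat.sum_antidiagonal_succ' (f := fun p ↦ α p.1 p.2),
      Nat.sum_antidiagonal_succ (f := fun p ↦ β p.1 p.2), Nat.sum_antidiagonal_succ,
      Nat.sum_antidiagonal_succ']
    simp only [zero_succ, succ_zero, succ_succ, sum_add_distrib]
    abel

/-- The coefficient `3 ^ k (2 k + 3 m)! / ((2 k)! m!)` of `∏_{j < k} (u + j (j + 1))` in the
Newton expansion of `3 ^ n ∏_{j < n} (u + (3 j + 1) (3 j + 2))`, where `n = k + m`. Indexing by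
`k` and `m = n - k` avoids truncated subtraction, and the last two factors are `(2 k + 3 m)!`
divided by `(2 k)! (3 m)!` and `(3 m)!` divided by `m!`. -/
def newtonCoeff (k m : ℕ) : ℕ :=
  3 ^ k * (2 * k + 3 * m).choose (3 * m) * (m + 1).ascFactorial (2 * m)

theorem newtonCoeff_mul_factorial (k m : ℕ) :
    newtonCoeff k m * ((2 * k)! * m !) = 3 ^ k * (2 * k + 3 * m)! := by
  have choose_eq := Nat.add_choose_mul_factorial_mul_factorial (2 * k) (3 * m)
  have ascFactorial_eq : m ! * (m + 1).ascFactorial (2 * m) = (3 * m)! := by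
    rw [Nat.factorial_mul_ascFactorial, show m + 2 * m = 3 * m by ring]
  rw [newtonCoeff, ← choose_eq, ← ascFactorial_eq]
  ring

theorem newtonCoeff_succ_zero (k : ℕ) : newtonCoeff (k + 1) 0 = 3 * newtonCoeff k 0 := by
  simp [newtonCoeff, pow_succ, mul_comm]

theorem newtonCoeff_zero_succ (m : ℕ) :
    newtonCoeff 0 (m + 1) = 3 * ((3 * m + 1) * (3 * m + 2)) * newtonCoeff 0 m := by
  have coeff := newtonCoeff_mul_factorial 0 m
  have coeff_succ := newtonCoeff_mul_factorial 0 (m + 1)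
  apply Nat.eq_of_mul_eq_mul_right (Nat.factorial_pos (m + 1))
  simp only [mul_zero, zero_add, Nat.factorial_zero, one_mul, pow_zero, mul_add, mul_one,
    Nat.factorial_succ] at coeff coeff_succ ⊢
  linear_combination coeff_succ - 3 * ((3 * m + 1) * (3 * m + 2)) * (m + 1) * coeff

theorem newtonCoeff_succ_succ (k m : ℕ) :
    newtonCoeff (k + 1) (m + 1) = 3 * newtonCoeff k (m + 1) +
      3 * ((2 * (k + 1) + 3 * m + 1) * (4 * (k + 1) + 3 * m + 2)) * newtonCoeff (k + 1) m := by
  have coeff_left := newtonCoeff_mul_factorial k (m + 1)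
  have coeff_right := newtonCoeff_mul_factorial (k + 1) m
  have coeff_succ := newtonCoeff_mul_factorial (k + 1) (m + 1)
  apply Nat.eq_of_mul_eq_mul_right (by positivity : 0 < (2 * (k + 1))! * (m + 1)!)
  simp only [show 2 * k + 3 * (m + 1) = 2 * k + 3 * m + 3 by ring,
    show 2 * (k + 1) = 2 * k + 2 by ring, show 2 * k + 2 + 3 * m = 2 * k + 3 * m + 2 by ring,
    show 2 * k + 2 + 3 * (m + 1) = 2 * k + 3 * m + 5 by ring, Nat.factorial_succ]
    at coeff_left coeff_right coeff_succ ⊢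
  linear_combination coeff_succ - 3 * ((2 * k + 2) * (2 * k + 1)) * coeff_left -
    3 * ((2 * (k + 1) + 3 * m + 1) * (4 * (k + 1) + 3 * m + 2)) * (m + 1) * coeff_right

theorem sum_newtonCoeff_mul_prod {R : Type*} [CommSemiring R] (u : R) (n : ℕ) :
    ∑ p ∈ antidiagonal n, (newtonCoeff p.1 p.2 : R) * ∏ j ∈ range p.1, (u + j * (j + 1)) =
      3 ^ n * ∏ j ∈ range n, (u + (3 * j + 1) * (3 * j + 2)) := by
  induction n with
  | zero => simp [newtonCoeff]
  | succ n ih =>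
    rw [sum_antidiagonal_succ_of_pascal
      (c := fun k m ↦ (newtonCoeff k m : R) * ∏ j ∈ range k, (u + j * (j + 1)))
      (α := fun k m ↦ 3 * (newtonCoeff k m : R) * ∏ j ∈ range (k + 1), (u + j * (j + 1)))
      (β := fun k m ↦ 3 * ((2 * k + 3 * m + 1) * (4 * k + 3 * m + 2)) * (newtonCoeff k m : R) *
        ∏ j ∈ range k, (u + j * (j + 1)))
      (fun m ↦ by simp [newtonCoeff_zero_succ]) (fun k ↦ by simp [newtonCoeff_succ_zero])
      (fun k m ↦ by rw [newtonCoeff_succ_succ]; push_cast; ring)]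
    rw [pow_succ, prod_range_succ, mul_mul_mul_comm, ← ih, sum_mul]
    refine sum_congr rfl fun p hp ↦ ?_
    obtain rfl := mem_antidiagonal.mp hp
    rw [prod_range_succ]
    push_cast
    ring

section CommRing

variable {R : Type*} [CommRing R]

theorem ascPochhammer_eval_mul_eval_one_sub (a : R) (k : ℕ) :
    ⦗a⦘_k * ⦗1 - a⦘_k = ∏ j ∈ range k, (a * (1 - a) + j * (j + 1)) := by
  induction k with
  | zero => simp
  | succ k ih =>
    rw [prod_range_succ, ← ih, ascPochhammer_succ_eval, ascPochhammer_succ_eval]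
    ring

theorem two_mul_ascPochhammer_eval_mul_eval_neg (a : R) (k : ℕ) :
    2 * (⦗a⦘_k * ⦗-a⦘_k) = ⦗a⦘_k * ⦗1 - a⦘_k + ⦗-a⦘_k * ⦗1 + a⦘_k := by
  cases k with
  | zero => norm_num
  | succ k =>
    have eval_succ_left (b : R) : ⦗b⦘_(k + 1) = b * ⦗b + 1⦘_k := by
      simp [ascPochhammer_succ_left]
    rw [eval_succ_left a, eval_succ_left (-a), ascPochhammer_succ_eval k (1 - a),
      ascPochhammer_succ_eval k (1 + a), neg_add_eq_sub, add_comm a]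
    ring

theorem ascPochhammer_eval_neg_natCast_mul_factorial (k m : ℕ) :
    ⦗-((k + m : ℕ) : R)⦘_k * (m ! : R) = (-1) ^ k * (k + m)! := by
  have h := Nat.factorial_mul_descFactorial (Nat.le_add_right k m)
  rw [Nat.add_sub_cancel_left] at h
  rw [ascPochhammer_eval_neg_eq_descPochhammer, descPochhammer_eval_eq_descFactorial, ← h]
  push_cast
  ring

end CommRing

section Field

variable {K : Type*} [Field K]

theorem four_pow_mul_factorial_mul_ascPochhammer_eval_half [NeZero (2 : K)] (k : ℕ) :
    4 ^ k * ((k ! : K) * ⦗(1 / 2 : K)⦘_k) = (2 * k)! := by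
  induction k with
  | zero => simp
  | succ k ih =>
    have two_ne_zero := NeZero.ne (2 : K)
    rw [mul_add, mul_one, Nat.factorial_succ, Nat.factorial_succ, Nat.factorial_succ,
      ascPochhammer_succ_eval]
    push_cast
    rw [← ih]
    field_simp
    ring

theorem nine_pow_mul_ascPochhammer_eval_thirds [NeZero (3 : K)] (a : K) (n : ℕ) :
    9 ^ n * (⦗1 / 3 + a / 3⦘_n * ⦗2 / 3 - a / 3⦘_n) =
      ∏ j ∈ range n, (a * (1 - a) + (3 * j + 1) * (3 * j + 2)) := by
  induction n with
  | zero => simp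
  | succ n ih =>
    have three_ne_zero := NeZero.ne (3 : K)
    rw [prod_range_succ, ← ih, ascPochhammer_succ_eval, ascPochhammer_succ_eval]
    field_simp
    ring

theorem sum_newtonCoeff_mul_ascPochhammer_eval [NeZero (3 : K)] (a : K) (n : ℕ) :
    ∑ p ∈ antidiagonal n, (newtonCoeff p.1 p.2 : K) * (⦗a⦘_p.1 * ⦗1 - a⦘_p.1) =
      27 ^ n * (⦗1 / 3 + a / 3⦘_n * ⦗2 / 3 - a / 3⦘_n) := by
  simp only [ascPochhammer_eval_mul_eval_one_sub]
  rw [sum_newtonCoeff_mul_prod, ← nine_pow_mul_ascPochhammer_eval_thirds, ← mul_assoc, ← mul_pow]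
  norm_num

theorem newtonCoeff_zero_eq_ascPochhammer_eval [NeZero (3 : K)] (n : ℕ) :
    (newtonCoeff 0 n : K) = 27 ^ n * (⦗(1 / 3 : K)⦘_n * ⦗(2 / 3 : K)⦘_n) := by
  have h := sum_newtonCoeff_mul_ascPochhammer_eval (0 : K) n
  rw [sum_eq_single_of_mem (0, n) (by simp)] at h
  · simpa using h
  · intro p hp hne
    have : p.1 ≠ 0 := fun h0 ↦ hne (by ext <;> simp_all)
    simp [this]

variable [CharZero K]

theorem gosper_weight_eq_newtonCoeff_div (k m : ℕ) :
    ⦗-((k + m : ℕ) : K)⦘_k / ((k ! : K) * ⦗(1 / 2 : K)⦘_k * ⦗-(3 * (k + m : ℕ) : K)⦘_k) *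
      (3 / 4) ^ k = newtonCoeff k m / newtonCoeff 0 (k + m) := by
  have factorial_ne_zero (i : ℕ) : (i ! : K) ≠ 0 := Nat.cast_ne_zero.mpr i.factorial_ne_zero
  have numerator :=
    eq_div_of_mul_eq (factorial_ne_zero _) (ascPochhammer_eval_neg_natCast_mul_factorial k m)
  have denominator := eq_div_of_mul_eq (factorial_ne_zero _)
    (ascPochhammer_eval_neg_natCast_mul_factorial (R := K) k (2 * k + 3 * m))
  rw [show k + (2 * k + 3 * m) = 3 * (k + m) by ring, Nat.cast_mul, Nat.cast_ofNat] at denominator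
  have half := eq_div_of_mul_eq (pow_ne_zero k (by norm_num))
    ((mul_comm _ _).trans (four_pow_mul_factorial_mul_ascPochhammer_eval_half (K := K) k))
  have coeff : (newtonCoeff k m : K) = 3 ^ k * (2 * k + 3 * m)! / ((2 * k)! * m !) :=
    eq_div_of_mul_eq (mul_ne_zero (factorial_ne_zero _) (factorial_ne_zero _))
      (by exact_mod_cast newtonCoeff_mul_factorial k m)
  have coeff_zero : (newtonCoeff 0 (k + m) : K) = (3 * (k + m))! / (k + m)! :=
    eq_div_of_mul_eq (factorial_ne_zero _)
      (by exact_mod_cast (by simpa using newtonCoeff_mul_factorial 0 (k + m)))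
  rw [numerator, denominator, half, coeff, coeff_zero, div_pow]
  have := factorial_ne_zero
  field_simp

theorem sum_gosper_eq_ascPochhammer_eval_div (a : K) (n : ℕ) :
    ∑ k ∈ range (n + 1),
      (⦗a⦘_k * ⦗1 - a⦘_k * ⦗-(n : K)⦘_k) / ((k ! : K) * ⦗(1 / 2 : K)⦘_k * ⦗-(3 * n : K)⦘_k) *
        (3 / 4) ^ k =
      (⦗1 / 3 + a / 3⦘_n * ⦗2 / 3 - a / 3⦘_n) / (⦗(1 / 3 : K)⦘_n * ⦗(2 / 3 : K)⦘_n) := by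
  have scale_ne_zero : (27 : K) ^ n ≠ 0 := pow_ne_zero n (by norm_num)
  rw [← mul_div_mul_left (⦗1 / 3 + a / 3⦘_n * _) _ scale_ne_zero,
    ← sum_newtonCoeff_mul_ascPochhammer_eval, ← newtonCoeff_zero_eq_ascPochhammer_eval, sum_div,
    ← Nat.sum_antidiagonal_eq_sum_range_succ (fun k _ ↦ (⦗a⦘_k * ⦗1 - a⦘_k * ⦗-(n : K)⦘_k) /
      ((k ! : K) * ⦗(1 / 2 : K)⦘_k * ⦗-(3 * n : K)⦘_k) * (3 / 4) ^ k)]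
  refine sum_congr rfl fun p hp ↦ ?_
  obtain rfl := mem_antidiagonal.mp hp
  rw [mul_div_assoc, mul_assoc, gosper_weight_eq_newtonCoeff_div]
  ring

theorem gosper_first_ext_ell_one_general (n : ℕ) (x : K) :
    ∑ k ∈ range (n + 1),
      (⦗3 * x⦘_k * ⦗-(3 * x)⦘_k * ⦗-(n : K)⦘_k) /
        ((k ! : K) * ⦗(1 / 2 : K)⦘_k * ⦗-(3 * n : K)⦘_k) * (3 / 4) ^ k =
      1 / 2 * ((⦗1 / 3 + x⦘_n * ⦗2 / 3 - x⦘_n) / (⦗(1 / 3 : K)⦘_n * ⦗(2 / 3 : K)⦘_n)) +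
        1 / 2 * ((⦗2 / 3 + x⦘_n * ⦗1 / 3 - x⦘_n) / (⦗(1 / 3 : K)⦘_n * ⦗(2 / 3 : K)⦘_n)) := by
  have at_pos := sum_gosper_eq_ascPochhammer_eval_div (3 * x) n
  have at_neg := sum_gosper_eq_ascPochhammer_eval_div (-(3 * x)) n
  have third (y : K) : 3 * y / 3 = y := mul_div_cancel_left₀ y three_ne_zero
  rw [third] at at_pos
  rw [neg_div, third, ← sub_eq_add_neg, sub_neg_eq_add, sub_neg_eq_add,
    mul_comm (⦗1 / 3 - x⦘_n)] at at_neg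
  rw [← at_pos, ← at_neg, mul_sum, mul_sum, ← sum_add_distrib]
  refine sum_congr rfl fun k _ ↦ ?_
  have average : ⦗3 * x⦘_k * ⦗-(3 * x)⦘_k =
      1 / 2 * (⦗3 * x⦘_k * ⦗1 - 3 * x⦘_k) + 1 / 2 * (⦗-(3 * x)⦘_k * ⦗1 + 3 * x⦘_k) := by
    linear_combination 1 / 2 * two_mul_ascPochhammer_eval_mul_eval_neg (3 * x) k
  rw [average]
  ring

end Field

theorem poch_eq_ascPochhammer_eval (a : ℂ) (k : ℕ) : poch a k = ⦗a⦘_k := by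
  induction k with
  | zero => simp [poch]
  | succ k ih => rw [ascPochhammer_succ_eval, ← ih, poch, poch, prod_range_succ]

end

theorem gosper_first_ext_ell_one (n : ℕ) (x : ℂ) (h6x : 6*x - 1 ≠ 0) :
    ∑ k ∈ Finset.range (n+1),
      (poch (3*x) k * poch (-(3*x)) k * poch (-(n : ℂ)) k) /
        ((Nat.factorial k : ℂ) * poch (1/2) k * poch (-(3*n : ℂ)) k) * (3/4 : ℂ)^k
      = (1/2 : ℂ) * ((poch (1/3 + x) n * poch (2/3 - x) n) / (poch (1/3) n * poch (2/3) n))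
        + (1/2 : ℂ) * ((poch (2/3 + x) n * poch (1/3 - x) n) / (poch (1/3) n * poch (2/3) n)) := by
  simpa only [poch_eq_ascPochhammer_eval] using gosper_first_ext_ell_one_general n x
end
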